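/- Let A be a commutative unital C*-algebra and let k ≥ 1. Then every state on M_k(A) is separable, i.e. lies in the weak-* closure of the convex hull of the product states. -/

import Mathlib

open scoped ComplexOrder

noncomputable section

/-- The state space of a unital (topological) star algebra `B`: the set of continuous linear
functionals `φ : B → ℂ` (with the weak-* topology on the dual) such that `φ 1 = 1` and
`φ (x* x) ≥ 0` for all `x`. -/
def stateSpace (B : Type*) [Ring B] [StarRing B] [Module ℂ B] [TopologicalSpace B] :
    Set (WeakDual ℂ B) :=
  {φ | φ 1 = 1 ∧ ∀ x : B, 0 ≤ φ (star x * x)}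

/-- Entrywise application of a continuous linear map to a matrix, as a continuous linear map. -/
def matrixMapCLM {k : ℕ} {B C' : Type*} [Ring B] [Module ℂ B] [TopologicalSpace B]
    [Ring C'] [Module ℂ C'] [TopologicalSpace C'] (g : B →L[ℂ] C') :
    Matrix (Fin k) (Fin k) B →L[ℂ] Matrix (Fin k) (Fin k) C' where
  toLinearMap := LinearMap.mapMatrix g.toLinearMap
  cont := by
    show Continuous fun M : Matrix (Fin k) (Fin k) B => M.map g
    exact continuous_pi fun i => continuous_pi fun j =>
      g.cont.comp ((continuous_apply j).comp (continuous_apply i))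

/-- The product state `μ ⊗ ψ` on `M_k(B)`, sending `x` to `μ (x.map ψ)`. -/
def productState {k : ℕ} {B : Type*} [Ring B] [Module ℂ B] [TopologicalSpace B]
    (μ : WeakDual ℂ (Matrix (Fin k) (Fin k) ℂ)) (ψ : WeakDual ℂ B) :
    WeakDual ℂ (Matrix (Fin k) (Fin k) B) :=
  (μ : Matrix (Fin k) (Fin k) ℂ →L[ℂ] ℂ).comp (matrixMapCLM (ψ : B →L[ℂ] ℂ))

/-- A state on `M_k(B)` is separable if it lies in the weak-* closure of the convex hull of the
product states `μ ⊗ ψ` (with `μ` a state on `M_k(ℂ)` and `ψ` a state on `B`), and entangled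
otherwise. -/
def IsSeparableState {k : ℕ} {B : Type*} [Ring B] [StarRing B] [Module ℂ B] [TopologicalSpace B]
    (φ : WeakDual ℂ (Matrix (Fin k) (Fin k) B)) : Prop :=
  φ ∈ closure (convexHull ℝ
    {χ : WeakDual ℂ (Matrix (Fin k) (Fin k) B) |
      ∃ μ ∈ stateSpace (Matrix (Fin k) (Fin k) ℂ), ∃ ψ ∈ stateSpace B, χ = productState μ ψ})

/-!
By Hahn–Banach it suffices to show that every bound `Re χ(x) ≤ r` valid for all product states `χ`
is valid for all states. For a state `χ` the bound says that `χ` is nonnegative on `r • 1 - ℜ x`,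
so the claim is that an element of `M_k(A)` on which all product states are nonnegative is positive.
Taking products with the characters `p` of `A`, such an element is positive semidefinite at every
point `p` of the Gelfand spectrum; since an element of `A` is invertible once no character
kills it, looking at determinants shows that the spectrum of a matrix over `A` is the union of
the spectra of its values at the points `p`, and so the matrix is positive.
-/

open ComplexStarModule Matrix WeakDual

theorem mem_closure_convexHull_of_forall_re_le {𝕜 E F : Type*} [RCLike 𝕜] [AddCommGroup E]
    [Module 𝕜 E] [Module ℝ E] [IsScalarTower ℝ 𝕜 E] [AddCommGroup F] [Module 𝕜 F]
    {B : E →ₗ[𝕜] F →ₗ[𝕜] 𝕜} {S : Set (WeakBilin B)} {a : WeakBilin B}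
    (h : ∀ (x : F) (r : ℝ), (∀ b ∈ S, RCLike.re (B b x) ≤ r) → RCLike.re (B a x) ≤ r) :
    a ∈ closure (convexHull ℝ S) := by
  have : ContinuousSMul ℝ (WeakBilin B) := IsScalarTower.continuousSMul 𝕜
  by_contra ha
  obtain ⟨f, r, hf_lt, hr_lt⟩ := RCLike.geometric_hahn_banach_closed_point (𝕜 := 𝕜)
    (convex_convexHull ℝ S).closure isClosed_closure ha
  obtain ⟨x, rfl⟩ := LinearMap.dualEmbedding_surjective B f
  exact hr_lt.not_ge <| h x r fun b hb =>
    (hf_lt b (subset_closure (subset_convexHull ℝ S hb))).le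

theorem mem_closure_convexHull_weakDual_of_forall_re_le {E : Type*} [AddCommGroup E] [Module ℂ E]
    [TopologicalSpace E] {S : Set (WeakDual ℂ E)} {φ : WeakDual ℂ E}
    (h : ∀ (x : E) (r : ℝ), (∀ χ ∈ S, (χ x).re ≤ r) → (φ x).re ≤ r) :
    φ ∈ closure (convexHull ℝ S) :=
  mem_closure_convexHull_of_forall_re_le (B := topDualPairing ℂ E) h

section States

variable {B : Type*} [Ring B] [StarRing B] [Algebra ℂ B] [StarModule ℂ B] [TopologicalSpace B]
  {φ : WeakDual ℂ B}

theorem map_star_of_mem_stateSpace (hφ : φ ∈ stateSpace B) (x : B) : φ (star x) = star (φ x) := by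
  have polarization (c : ℂ) : (c * φ (star x) + star c * φ x).im = 0 := by
    have hx : (φ (star x * x)).im = 0 := (Complex.nonneg_iff.1 (hφ.2 x)).2.symm
    have hxc : (φ (star (x + c • 1) * (x + c • 1))).im = 0 :=
      (Complex.nonneg_iff.1 (hφ.2 _)).2.symm
    have expand : star (x + c • 1) * (x + c • 1) =
        star x * x + (c • star x + star c • x) + (star c * c) • (1 : B) := by
      simp only [star_add, star_smul, star_one, add_mul, mul_add, mul_smul_comm, smul_mul_assoc,
        mul_one, one_mul]
      module
    have hc : (star c * c).im = 0 := (Complex.nonneg_iff.1 (star_mul_self_nonneg c)).2.symm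
    simpa only [expand, map_add, map_smul, smul_eq_mul, hφ.1, mul_one, Complex.add_im, hx, hc,
      zero_add, add_zero] using hxc
  have re_eq : (φ (star x)).re = (φ x).re := by
    simpa [add_neg_eq_zero] using polarization Complex.I
  have im_eq : (φ (star x)).im = -(φ x).im := by
    simpa [add_eq_zero_iff_eq_neg] using polarization 1
  exact Complex.ext re_eq im_eq

theorem apply_realPart_of_mem_stateSpace (hφ : φ ∈ stateSpace B) (x : B) :
    φ (ℜ x) = (φ x).re := by
  rw [realPart_apply_coe, ← Complex.coe_smul, map_smul, map_add, map_star_of_mem_stateSpace hφ,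
    Complex.star_def, Complex.add_conj, smul_eq_mul]
  simp

theorem nonneg_apply_smul_one_sub_realPart_iff (hφ : φ ∈ stateSpace B) (x : B) (r : ℝ) :
    0 ≤ φ ((r : ℂ) • (1 : B) - ℜ x) ↔ (φ x).re ≤ r := by
  rw [map_sub, map_smul, hφ.1, apply_realPart_of_mem_stateSpace hφ, smul_eq_mul, mul_one,
    sub_nonneg, Complex.real_le_real]

end States

section VectorStates

variable {n : Type*} [Fintype n]

/-- The state `M ↦ ⟨v, M v⟩ / ⟨v, v⟩` on complex matrices given by a nonzero vector `v`. Dividing by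
`⟨v, v⟩` avoids a restriction to unit vectors; at `v = 0` the functional is zero and not a state. -/
def vectorState (v : n → ℂ) : WeakDual ℂ (Matrix n n ℂ) :=
  LinearMap.toContinuousLinearMap
    { toFun M := (star v ⬝ᵥ v)⁻¹ * (star v ⬝ᵥ M *ᵥ v)
      map_add' M N := by rw [add_mulVec, dotProduct_add, mul_add]
      map_smul' c M := by
        rw [smul_mulVec, dotProduct_smul, RingHom.id_apply, smul_eq_mul, smul_eq_mul,
          mul_left_comm] }

theorem vectorState_apply (v : n → ℂ) (M : Matrix n n ℂ) :
    vectorState v M = (star v ⬝ᵥ v)⁻¹ * (star v ⬝ᵥ M *ᵥ v) :=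
  rfl

theorem vectorState_mem_stateSpace [DecidableEq n] {v : n → ℂ} (hv : v ≠ 0) :
    vectorState v ∈ stateSpace (Matrix n n ℂ) := by
  have hvv : 0 < star v ⬝ᵥ v := dotProduct_star_self_pos_iff.2 hv
  refine ⟨?_, fun M => ?_⟩
  · rw [vectorState_apply, one_mulVec, inv_mul_cancel₀ hvv.ne']
  · exact mul_nonneg (inv_nonneg.2 hvv.le)
      ((posSemidef_conjTranspose_mul_self M).dotProduct_mulVec_nonneg v)

theorem posSemidef_of_dotProduct_mulVec_nonneg {M : Matrix n n ℂ}
    (h : ∀ v : n → ℂ, 0 ≤ star v ⬝ᵥ M *ᵥ v) : M.PosSemidef := by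
  classical
  rw [← isPositive_toEuclideanLin_iff, LinearMap.isPositive_iff_complex]
  intro v
  have inner_nonneg : 0 ≤ inner ℂ (M.toEuclideanLin v) v := by
    rw [← inner_conj_symm, EuclideanSpace.inner_eq_star_dotProduct, dotProduct_comm]
    exact star_nonneg_iff.2 (h v.ofLp)
  obtain ⟨hre, him⟩ := Complex.nonneg_iff.1 inner_nonneg
  exact ⟨Complex.ext rfl him, hre⟩

theorem posSemidef_of_forall_mem_stateSpace_nonneg [DecidableEq n] {M : Matrix n n ℂ}
    (h : ∀ μ ∈ stateSpace (Matrix n n ℂ), 0 ≤ μ M) : M.PosSemidef := by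
  refine posSemidef_of_dotProduct_mulVec_nonneg fun v => ?_
  rcases eq_or_ne v 0 with rfl | hv
  · simp
  have hvv : 0 < star v ⬝ᵥ v := dotProduct_star_self_pos_iff.2 hv
  calc 0 ≤ (star v ⬝ᵥ v) * vectorState v M :=
        mul_nonneg hvv.le (h _ (vectorState_mem_stateSpace hv))
    _ = star v ⬝ᵥ M *ᵥ v := by rw [vectorState_apply, mul_inv_cancel_left₀ hvv.ne']

end VectorStates

section Characters

variable {A : Type*} [CStarAlgebra A]

theorem mem_stateSpace_of_characterSpace (p : characterSpace ℂ A) :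
    (p : WeakDual ℂ A) ∈ stateSpace A := by
  refine ⟨map_one p, fun x => ?_⟩
  have hp : p (star x * x) = star (p x) * p x := by rw [map_mul, map_star]
  exact hp ▸ star_mul_self_nonneg (p x)

theorem productState_characterSpace_mem_stateSpace {k : ℕ}
    {μ : WeakDual ℂ (Matrix (Fin k) (Fin k) ℂ)} (hμ : μ ∈ stateSpace (Matrix (Fin k) (Fin k) ℂ))
    (p : characterSpace ℂ A) :
    productState μ (p : WeakDual ℂ A) ∈ stateSpace (Matrix (Fin k) (Fin k) A) := by
  refine ⟨?_, fun x => ?_⟩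
  · change μ ((1 : Matrix (Fin k) (Fin k) A).map p) = 1
    rw [Matrix.map_one p (map_zero p) (map_one p), hμ.1]
  · change 0 ≤ μ ((xᴴ * x).map p)
    rw [Matrix.map_mul, conjTranspose_map p (map_star p)]
    exact hμ.2 (x.map p)

end Characters

section Positivity

theorem exists_eq_star_mul_self_of_spectrum_nonneg {D : Type*} [CStarAlgebra D] {a : D}
    (ha : IsSelfAdjoint a) (h : ∀ c ∈ spectrum ℂ a, 0 ≤ c) : ∃ y, a = star y * y := by
  let _ := CStarAlgebra.spectralOrder D
  have := CStarAlgebra.spectralOrderedRing D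
  exact CStarAlgebra.nonneg_iff_eq_star_mul_self.1
    ((StarOrderedRing.nonneg_iff_spectrum_nonneg (R := ℂ) a ha.isStarNormal).2 h)

theorem isHermitian_of_forall_isHermitian_map {A n : Type*} [CommCStarAlgebra A]
    {M : Matrix n n A} (hM : ∀ p : characterSpace ℂ A, (M.map p).IsHermitian) : M.IsHermitian := by
  ext i j
  refine (gelfandTransform_isometry A).injective (ContinuousMap.ext fun p => ?_)
  exact (map_star p (M j i)).trans ((hM p).apply i j)

variable {A n : Type*} [Fintype n]

theorem spectrum_matrix_eq_iUnion_characterSpace [DecidableEq n] [NormedCommRing A]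
    [NormedAlgebra ℂ A] [CompleteSpace A] (M : Matrix n n A) :
    spectrum ℂ M = ⋃ p : characterSpace ℂ A, spectrum ℂ (M.map p) := by
  refine Set.Subset.antisymm (fun c hc => ?_) (Set.iUnion_subset fun p =>
    AlgHom.spectrum_apply_subset (CharacterSpace.toAlgHom p).mapMatrix M)
  rw [spectrum.mem_iff, isUnit_iff_isUnit_det] at hc
  obtain ⟨p, hp⟩ := CharacterSpace.exists_apply_eq_zero hc
  refine Set.mem_iUnion.2 ⟨p, ?_⟩
  have det_eq_zero : (algebraMap ℂ (Matrix n n ℂ) c - M.map p).det = 0 :=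
    calc (algebraMap ℂ (Matrix n n ℂ) c - M.map p).det
        = ((CharacterSpace.toAlgHom p).mapMatrix (algebraMap ℂ (Matrix n n A) c - M)).det := by
          rw [map_sub, AlgHom.commutes, AlgHom.mapMatrix_apply]
          rfl
      _ = 0 := ((CharacterSpace.toAlgHom p).map_det _).symm.trans hp
  rw [spectrum.mem_iff, isUnit_iff_isUnit_det, det_eq_zero]
  exact not_isUnit_zero

theorem exists_eq_star_mul_self_of_forall_posSemidef_map [CommCStarAlgebra A] {M : Matrix n n A}
    (hM : ∀ p : characterSpace ℂ A, (M.map p).PosSemidef) :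
    ∃ y : Matrix n n A, M = star y * y := by
  classical
  let _ := CStarAlgebra.spectralOrder A
  have := CStarAlgebra.spectralOrderedRing A
  have selfAdjoint : IsSelfAdjoint (CStarMatrix.ofMatrix M) :=
    isHermitian_of_forall_isHermitian_map fun p => (hM p).isHermitian
  refine exists_eq_star_mul_self_of_spectrum_nonneg (D := CStarMatrix n n A) selfAdjoint
    fun c hc => ?_
  replace hc : c ∈ spectrum ℂ M := hc
  rw [spectrum_matrix_eq_iUnion_characterSpace] at hc
  obtain ⟨p, hp⟩ := Set.mem_iUnion.1 hc
  exact (posSemidef_iff_isHermitian_and_spectrum_nonneg.1 (hM p)).2 hp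

end Positivity

/-- If `A` is a commutative unital C*-algebra and `k ≥ 1`, then every state on `M_k(A)` is
separable. -/
theorem all_states_separable_of_comm
    {A : Type*} [CommCStarAlgebra A] (k : ℕ) (hk : 1 ≤ k) :
    ∀ φ ∈ stateSpace (Matrix (Fin k) (Fin k) A), IsSeparableState φ := by
  intro φ hφ
  refine mem_closure_convexHull_weakDual_of_forall_re_le fun x r hxr => ?_
  have posSemidef_at (p : characterSpace ℂ A) :
      (((r : ℂ) • (1 : Matrix (Fin k) (Fin k) A) - ℜ x).map p).PosSemidef :=
    posSemidef_of_forall_mem_stateSpace_nonneg fun μ hμ =>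
      have product_mem := productState_characterSpace_mem_stateSpace hμ p
      (nonneg_apply_smul_one_sub_realPart_iff product_mem x r).2
        (hxr _ ⟨μ, hμ, p, mem_stateSpace_of_characterSpace p, rfl⟩)
  obtain ⟨y, hy⟩ := exists_eq_star_mul_self_of_forall_posSemidef_map posSemidef_at
  exact (nonneg_apply_smul_one_sub_realPart_iff hφ x r).1 (hy ▸ hφ.2 y)

end
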